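/- Let Ω be a non-empty closed discrete subset of ℂ and let Â be an entire function on ℂ. Then for any φ̂ ∈ R̂_Ω, the convolution Â * φ̂ belongs to R̂_Ω. Moreover, for any path γ : [0,1] → ℂ∖Ω along which φ̂ can be continued, starting at a point ζ₀ close enough to 0 and ending at ζ₁, the analytic continuation of Â * φ̂ along γ is given, for ζ close to ζ₁, by cont_γ(Â*φ̂)(ζ) = ∫₀^{ζ₀} Â(ζ−ξ) φ̂(ξ) dξ + ∫₀^1 Â(ζ−γ(s)) (cont_{γ_s}φ̂)(γ(s)) γ′(s) ds + ∫_{ζ₁}^ζ Â(ζ−ξ) (cont_γ φ̂)(ξ) dξ, where γ_s denotes the restriction of γ to [0,s] and cont_{γ_s}φ̂ is the germ obtained by analytic continuation of φ̂ along γ_s. -/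

import Mathlib

open Set Metric Filter Topology intervalIntegral

noncomputable section

/-- A path `γ : [a,b] → ℂ` which is piecewise `C¹`. -/
def PiecewiseC1On (γ : ℝ → ℂ) (a b : ℝ) : Prop :=
  ContinuousOn γ (Set.Icc a b) ∧
  ∃ (n : ℕ) (u : ℕ → ℝ), u 0 = a ∧ u n = b ∧ (∀ i < n, u i ≤ u (i + 1)) ∧
    ∀ i < n, ContDiffOn ℝ 1 γ (Set.Icc (u i) (u (i + 1)))

/-- The germ at `γ a` of the function `f` admits analytic continuation along
`γ` restricted to `[a,b]`, resulting in the germ of `g` at `γ b`.  This is the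
usual definition via a family of analytic elements `(F t, r t)` along the path
which are locally compatible. -/
def ContAlong (f : ℂ → ℂ) (γ : ℝ → ℂ) (a b : ℝ) (g : ℂ → ℂ) : Prop :=
  ∃ (F : ℝ → ℂ → ℂ) (r : ℝ → ℝ),
    (∀ t ∈ Set.Icc a b, 0 < r t ∧ AnalyticOnNhd ℂ (F t) (Metric.ball (γ t) (r t))) ∧
    (∀ t ∈ Set.Icc a b, ∃ ε > 0, ∀ t' ∈ Set.Icc a b, |t' - t| < ε →
      Set.EqOn (F t) (F t') (Metric.ball (γ t) (r t) ∩ Metric.ball (γ t') (r t'))) ∧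
    (∀ᶠ z in 𝓝 (γ a), F a z = f z) ∧
    (∀ᶠ z in 𝓝 (γ b), F b z = g z)

/-- The germ of `f` at `γ a` admits analytic continuation along `γ|[a,b]`. -/
def ContinuableAlong (f : ℂ → ℂ) (γ : ℝ → ℂ) (a b : ℝ) : Prop :=
  ∃ g, ContAlong f γ a b g

/-- `f` is an `Ω`-continuable holomorphic germ at `0`: it is holomorphic on some
disc `D_R` with `D_R∖{0}` disjoint from `Ω`, and admits analytic continuation
along every (piecewise `C¹`) path of `ℂ∖Ω` originating from any point of `D_R∖{0}`. -/
def OmegaCont (Ω : Set ℂ) (f : ℂ → ℂ) : Prop :=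
  ∃ R > 0, AnalyticOnNhd ℂ f (Metric.ball 0 R) ∧
    (∀ ζ ∈ Metric.ball (0:ℂ) R, ζ ≠ 0 → ζ ∉ Ω) ∧
    ∀ γ : ℝ → ℂ, PiecewiseC1On γ 0 1 → γ 0 ∈ Metric.ball (0:ℂ) R → γ 0 ≠ 0 →
      (∀ t ∈ Set.Icc (0:ℝ) 1, γ t ∉ Ω) → ContinuableAlong f γ 0 1

/-- Convolution of two germs: `(f ⋆ g)(ζ) = ∫₀^ζ f(ξ) g(ζ-ξ) dξ`, the integral
being taken over the line segment from `0` to `ζ`. -/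
def conv (f g : ℂ → ℂ) (ζ : ℂ) : ℂ :=
  ζ * ∫ t in (0:ℝ)..1, f ((t : ℂ) * ζ) * g ((1 - (t : ℂ)) * ζ)

/-!
For `ζ` close to `γ t`, continue `A * φ` by integrating `A (ζ - ξ)` against `φ` from `0` to
`γ 0`, then against the continuation of `φ` along `γ` up to time `t`, and finally along the
segment from `γ t` to `ζ`. Since `A` is entire, each of the three integrals is holomorphic in
`ζ` on the disc of the element `F t`: the kernel has no singularity for `ζ` to meet. When `t`
moves slightly, the change in the path integral is compensated by the change in the last
segment, because the holomorphic function `ξ ↦ A (ζ - ξ) * F t ξ` has a primitive on that disc.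
-/

open MeasureTheory

section ParametricIntegral

variable {E : Type*} [NormedAddCommGroup E] [NormedSpace ℂ E] {U : Set ℂ}

section Deriv

variable {X : Type*} [TopologicalSpace X] {S : Set X} {K : ℂ → X → E}

lemma continuousOn_deriv_of_continuousOn_uncurry [CompleteSpace E] (hU : IsOpen U)
    (hK : ContinuousOn (Function.uncurry K) (U ×ˢ S))
    (hd : ∀ s ∈ S, DifferentiableOn ℂ (fun z => K z s) U) {z : ℂ} (hz : z ∈ U) :
    ContinuousOn (fun s => deriv (fun w => K w s) z) S := by
  intro s hs
  have hlim : TendstoLocallyUniformlyOn (fun s w => K w s) (fun w => K w s) (𝓝[S] s) U := by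
    rw [tendstoLocallyUniformlyOn_iff_forall_isCompact hU]
    intro C hCU hC u hu
    have hK' : ContinuousOn (Function.uncurry fun s w => K w s) (S ×ˢ C) :=
      hK.comp continuous_swap.continuousOn fun _ hx => ⟨hCU hx.2, hx.1⟩
    obtain ⟨v, hv, hvu⟩ := hC.mem_uniformity_of_prod hK' hs (symm_le_uniformity hu)
    exact mem_of_superset hv hvu
  exact (hlim.deriv (eventually_mem_nhdsWithin.mono hd) hU).tendsto_at hz

lemma exists_eventually_forall_norm_deriv_le (hU : IsOpen U) (hS : IsCompact S)
    (hK : ContinuousOn (Function.uncurry K) (U ×ˢ S))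
    (hd : ∀ s ∈ S, DifferentiableOn ℂ (fun z => K z s) U) {z₀ : ℂ} (hz₀ : z₀ ∈ U) :
    ∃ M, ∀ᶠ z in 𝓝 z₀, ∀ s ∈ S, ‖deriv (fun w => K w s) z‖ ≤ M := by
  obtain ⟨ε, hε, hεU⟩ := nhds_basis_closedBall.mem_iff.1 (hU.mem_nhds hz₀)
  obtain ⟨M, hM⟩ := ((isCompact_closedBall z₀ ε).prod hS).exists_bound_of_continuousOn
    (hK.mono (prod_mono_left hεU))
  refine ⟨M / (ε / 2), ?_⟩
  filter_upwards [ball_mem_nhds z₀ (half_pos hε)] with z hz s hs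
  have hsub : closedBall z (ε / 2) ⊆ closedBall z₀ ε :=
    closedBall_subset_closedBall' (by linarith [mem_ball.1 hz])
  refine Complex.norm_deriv_le_of_forall_mem_sphere_norm_le (half_pos hε) ?_
    fun w hw => hM (w, s) ⟨hsub (sphere_subset_closedBall hw), hs⟩
  exact ((hd s hs).mono
    (closure_ball_subset_closedBall.trans (hsub.trans hεU))).diffContOnCl

end Deriv

theorem differentiableOn_intervalIntegral_smul {a b : ℝ} (hU : IsOpen U) {K : ℂ → ℝ → ℂ}
    (hK : ContinuousOn (Function.uncurry K) (U ×ˢ uIcc a b))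
    (hd : ∀ s ∈ uIcc a b, DifferentiableOn ℂ (fun z => K z s) U)
    {h : ℝ → E} (hh : IntervalIntegrable h volume a b) :
    DifferentiableOn ℂ (fun z => ∫ s in a..b, K z s • h s) U := by
  intro z₀ hz₀
  have hint : ∀ z ∈ U, IntervalIntegrable (fun s => K z s • h s) volume a b := fun z hz =>
    hh.continuousOn_smul (hK.comp (f := fun s => (z, s)) (by fun_prop) fun s hs => ⟨hz, hs⟩)
  have hmeas : AEStronglyMeasurable (fun s => deriv (fun z => K z s) z₀)
      (volume.restrict (uIoc a b)) :=
    ((continuousOn_deriv_of_continuousOn_uncurry hU hK hd hz₀).mono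
      uIoc_subset_uIcc).aestronglyMeasurable measurableSet_uIoc
  obtain ⟨M, hM⟩ := exists_eventually_forall_norm_deriv_le hU isCompact_uIcc hK hd hz₀
  refine (intervalIntegral.hasDerivAt_integral_of_dominated_loc_of_deriv_le (𝕜 := ℂ)
    (F := fun z s => K z s • h s) (F' := fun z s => deriv (fun w => K w s) z • h s)
    (bound := fun s => M * ‖h s‖) (inter_mem (hU.mem_nhds hz₀) hM) ?_ (hint z₀ hz₀)
    (hmeas.smul hh.def'.aestronglyMeasurable) ?_ (hh.norm.const_mul M)
    ?_).2.differentiableAt.differentiableWithinAt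
  · filter_upwards [hU.mem_nhds hz₀] with z hz
    exact (hint z hz).def'.aestronglyMeasurable
  · refine Eventually.of_forall fun s hs z hz => ?_
    rw [norm_smul]
    gcongr
    exact hz.2 s (uIoc_subset_uIcc hs)
  · refine Eventually.of_forall fun s hs z hz => ?_
    exact ((hd s (uIoc_subset_uIcc hs)).differentiableAt
      (hU.mem_nhds hz.1)).hasDerivAt.smul_const (h s)

lemma differentiable_integral_comp_sub_smul {A : ℂ → ℂ} (hA : Differentiable ℂ A) {a b : ℝ}
    {γ : ℝ → ℂ} (hγ : ContinuousOn γ (uIcc a b)) {h : ℝ → E}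
    (hh : IntervalIntegrable h volume a b) :
    Differentiable ℂ (fun z => ∫ s in a..b, A (z - γ s) • h s) := by
  refine differentiableOn_univ.1
    (differentiableOn_intervalIntegral_smul isOpen_univ ?_ (fun s _ => ?_) hh)
  · exact hA.continuous.comp_continuousOn
      (continuousOn_fst.sub (hγ.comp continuousOn_snd fun _ hx => hx.2))
  · exact (hA.comp (differentiable_id.sub_const _)).differentiableOn

end ParametricIntegral

namespace PiecewiseC1On

variable {γ : ℝ → ℂ} {a b : ℝ}

lemma exists_countable_hasDerivAt (hγ : PiecewiseC1On γ a b) :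
    ∃ S : Set ℝ, S.Countable ∧ ∀ t ∈ Icc a b \ S, HasDerivAt γ (deriv γ t) t := by
  obtain ⟨-, n, u, rfl, rfl, -, hC⟩ := hγ
  refine ⟨range u, countable_range u, ?_⟩
  suffices ∀ m ≤ n, ∀ t ∈ Icc (u 0) (u m) \ range u, HasDerivAt γ (deriv γ t) t from this n le_rfl
  intro m
  induction m with
  | zero => exact fun _ t ⟨ht, htu⟩ => absurd ⟨0, le_antisymm ht.1 ht.2⟩ htu
  | succ k ih =>
    rintro hk t ⟨ht, htu⟩
    rcases le_or_gt t (u k) with htk | htk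
    · exact ih (by omega) t ⟨⟨ht.1, htk⟩, htu⟩
    · have htk' : t < u (k + 1) := ht.2.lt_of_ne fun h => htu ⟨k + 1, h.symm⟩
      exact ((hC k hk).contDiffAt (Icc_mem_nhds htk htk')).differentiableAt
        one_ne_zero |>.hasDerivAt

lemma intervalIntegrable_deriv (hγ : PiecewiseC1On γ a b) :
    IntervalIntegrable (deriv γ) volume a b := by
  obtain ⟨-, n, u, rfl, rfl, hmono, hC⟩ := hγ
  refine IntervalIntegrable.trans_iterate fun i hi => ?_
  rcases (hmono i hi).eq_or_lt with heq | hlt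
  · rw [heq]
  have hcont : ContinuousOn (derivWithin γ (Icc (u i) (u (i + 1)))) (Icc (u i) (u (i + 1))) :=
    (hC i hi).continuousOn_derivWithin (uniqueDiffOn_Icc hlt) le_rfl
  refine (hcont.intervalIntegrable_of_Icc hlt.le).congr_ae ?_
  rw [uIoc_of_le hlt.le, ← restrict_Ioo_eq_restrict_Ioc]
  filter_upwards [ae_restrict_mem measurableSet_Ioo] with t ht
  exact derivWithin_of_mem_nhds (Icc_mem_nhds ht.1 ht.2)

theorem integral_comp_mul_deriv_eq_sub (hγ : PiecewiseC1On γ a b) {f P : ℂ → ℂ} {U : Set ℂ}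
    (hf : ContinuousOn f U) (hP : ∀ z ∈ U, HasDerivAt P (f z) z) {t t' : ℝ}
    (ht : t ∈ Icc a b) (ht' : t' ∈ Icc a b) (hU : MapsTo γ (uIcc t t') U) :
    ∫ s in t..t', f (γ s) * deriv γ s = P (γ t') - P (γ t) := by
  obtain ⟨S, hS, hderiv⟩ := hγ.exists_countable_hasDerivAt
  have hsub : uIcc t t' ⊆ Icc a b := uIcc_subset_Icc ht ht'
  have hcont : ContinuousOn γ (uIcc t t') := hγ.1.mono hsub
  have hint : IntervalIntegrable (deriv γ) volume t t' :=
    hγ.intervalIntegrable_deriv.mono_set (hsub.trans Icc_subset_uIcc)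
  refine integral_eq_of_hasDerivAt_off_countable (fun s => P (γ s)) _ hS ?_ ?_
    (hint.continuousOn_mul (hf.comp hcont hU))
  · exact ContinuousOn.comp (fun z hz => (hP z hz).continuousAt.continuousWithinAt) hcont hU
  · rintro s ⟨hs, hsS⟩
    have hs' : s ∈ uIcc t t' := Ioo_subset_Icc_self hs
    exact (hP _ (hU hs')).comp_of_eq s (hderiv s ⟨hsub hs', hsS⟩) rfl

end PiecewiseC1On

/-- The integral `∫_p^q f(ξ) dξ` along the oriented segment from `p` to `q`, parametrized by
`t ↦ p + t (q - p)` on `[0, 1]`. -/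
def segIntegral (f : ℂ → ℂ) (p q : ℂ) : ℂ :=
  (∫ t in (0 : ℝ)..1, f (p + (t : ℂ) * (q - p))) * (q - p)

section SegIntegral

variable {U : Set ℂ} {f g : ℂ → ℂ} {p q z c : ℂ} {ρ : ℝ}

lemma add_ofReal_mul_sub_mem_of_convex (hU : Convex ℝ U) (hp : p ∈ U) (hq : q ∈ U) {t : ℝ}
    (ht : t ∈ uIcc (0 : ℝ) 1) : p + (t : ℂ) * (q - p) ∈ U :=
  hU.add_smul_sub_mem hp hq (uIcc_of_le (zero_le_one' ℝ) ▸ ht)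

lemma segIntegral_congr (hU : Convex ℝ U) (hp : p ∈ U) (hq : q ∈ U) (hfg : EqOn f g U) :
    segIntegral f p q = segIntegral g p q := by
  unfold segIntegral
  congr 1
  exact integral_congr fun t ht => hfg (add_ofReal_mul_sub_mem_of_convex hU hp hq ht)

lemma segIntegral_eq_sub (hU : Convex ℝ U) (hf : ContinuousOn f U) {P : ℂ → ℂ}
    (hP : ∀ z ∈ U, HasDerivAt P (f z) z) (hp : p ∈ U) (hq : q ∈ U) :
    segIntegral f p q = P q - P p := by
  have hmem : ∀ t ∈ Icc (0 : ℝ) 1, p + t • (q - p) ∈ U := fun t => hU.add_smul_sub_mem hp hq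
  have hFTC := integral_unitInterval_deriv_eq_sub (f := P) (f' := f) (z₀ := p) (z₁ := q - p)
    (hf.comp (by fun_prop) hmem) fun t ht => hP _ (hmem t ht)
  rwa [smul_eq_mul, mul_comm, add_sub_cancel] at hFTC

lemma segIntegral_add_segIntegral (hf : DifferentiableOn ℂ f (ball c ρ)) (hp : p ∈ ball c ρ)
    (hq : q ∈ ball c ρ) (hz : z ∈ ball c ρ) :
    segIntegral f p q + segIntegral f q z = segIntegral f p z := by
  obtain ⟨P, hP⟩ := hf.isExactOn_ball
  have hseg {x y : ℂ} := segIntegral_eq_sub (p := x) (q := y) (convex_ball c ρ) hf.continuousOn hP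
  rw [hseg hp hq, hseg hq hz, hseg hp hz]
  ring

lemma PiecewiseC1On.integral_comp_mul_deriv_add_segIntegral {γ : ℝ → ℂ} {a b : ℝ}
    (hγ : PiecewiseC1On γ a b) (hf : DifferentiableOn ℂ f (ball c ρ)) {t t' : ℝ}
    (ht : t ∈ Icc a b) (ht' : t' ∈ Icc a b) (hball : MapsTo γ (uIcc t t') (ball c ρ))
    (hz : z ∈ ball c ρ) :
    (∫ s in t..t', f (γ s) * deriv γ s) + segIntegral f (γ t') z = segIntegral f (γ t) z := by
  obtain ⟨P, hP⟩ := hf.isExactOn_ball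
  have hseg {x y : ℂ} := segIntegral_eq_sub (p := x) (q := y) (convex_ball c ρ) hf.continuousOn hP
  rw [hγ.integral_comp_mul_deriv_eq_sub hf.continuousOn hP ht ht' hball,
    hseg (hball right_mem_uIcc) hz, hseg (hball left_mem_uIcc) hz]
  ring

end SegIntegral

section ConvolutionIntegral

variable {A f : ℂ → ℂ}

lemma conv_eq_segIntegral (A f : ℂ → ℂ) (ζ : ℂ) :
    conv A f ζ = segIntegral (fun ξ => A (ζ - ξ) * f ξ) 0 ζ := by
  have hflip := integral_comp_sub_left (a := 0) (b := 1)
    (fun t : ℝ => A (t * ζ) * f ((1 - t) * ζ)) 1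
  simp only [sub_self, sub_zero] at hflip
  rw [conv, segIntegral, ← hflip, mul_comm]
  simp only [sub_zero, zero_add, Complex.ofReal_sub, Complex.ofReal_one, sub_sub_cancel,
    sub_mul, one_mul]

lemma differentiableOn_comp_sub_left_mul (hA : Differentiable ℂ A) {U : Set ℂ}
    (hf : DifferentiableOn ℂ f U) (ζ : ℂ) : DifferentiableOn ℂ (fun ξ => A (ζ - ξ) * f ξ) U :=
  (hA.comp (differentiable_id.const_sub ζ)).differentiableOn.mul hf

lemma differentiable_segIntegral_comp_sub_mul (hA : Differentiable ℂ A) {U : Set ℂ}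
    (hU : Convex ℝ U) (hf : ContinuousOn f U) {p q : ℂ} (hp : p ∈ U) (hq : q ∈ U) :
    Differentiable ℂ fun ζ => segIntegral (fun ξ => A (ζ - ξ) * f ξ) p q :=
  (differentiable_integral_comp_sub_smul hA (by fun_prop) (ContinuousOn.intervalIntegrable
    (hf.comp (by fun_prop) fun _ ht => add_ofReal_mul_sub_mem_of_convex hU hp hq ht))).mul_const _

lemma differentiableOn_segIntegral_comp_sub_mul (hA : Differentiable ℂ A) {U : Set ℂ}
    (hUo : IsOpen U) (hU : Convex ℝ U) (hf : DifferentiableOn ℂ f U) {p : ℂ} (hp : p ∈ U) :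
    DifferentiableOn ℂ (fun ζ => segIntegral (fun ξ => A (ζ - ξ) * f ξ) p ζ) U := by
  have hmem {ζ : ℂ} {t : ℝ} (hζ : ζ ∈ U) (ht : t ∈ uIcc (0 : ℝ) 1) :
      p + (t : ℂ) * (ζ - p) ∈ U := add_ofReal_mul_sub_mem_of_convex hU hp hζ ht
  have hAc := hA.continuous
  have hint := differentiableOn_intervalIntegral_smul (a := 0) (b := 1) hUo
    (K := fun ζ t => A (ζ - (p + (t : ℂ) * (ζ - p))) * f (p + (t : ℂ) * (ζ - p)))
    (h := fun _ => (1 : ℂ)) ?_ ?_ intervalIntegrable_const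
  · simp only [smul_eq_mul, mul_one] at hint
    exact hint.mul (by fun_prop)
  · exact (Continuous.continuousOn (by fun_prop)).mul
      (hf.continuousOn.comp (by fun_prop) fun _ hx => hmem hx.1 hx.2)
  · exact fun t ht => (hA.comp (by fun_prop)).differentiableOn.mul
      (hf.comp (by fun_prop) fun _ hζ => hmem hζ ht)

lemma differentiableOn_conv (hA : Differentiable ℂ A) {U : Set ℂ} (hUo : IsOpen U)
    (hU : Convex ℝ U) (hf : DifferentiableOn ℂ f U) (h0 : 0 ∈ U) :
    DifferentiableOn ℂ (conv A f) U :=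
  (differentiableOn_segIntegral_comp_sub_mul hA hUo hU hf h0).congr
    fun ζ _ => conv_eq_segIntegral A f ζ

end ConvolutionIntegral

/-- A locally compatible family of analytic elements `(F t, r t)` along `γ` restricted to
`[a, b]`: the data underlying `ContAlong`, without the conditions on the germs at the ends. -/
structure IsElementFamily (F : ℝ → ℂ → ℂ) (r : ℝ → ℝ) (γ : ℝ → ℂ) (a b : ℝ) : Prop where
  analytic : ∀ t ∈ Icc a b, 0 < r t ∧ AnalyticOnNhd ℂ (F t) (ball (γ t) (r t))
  compatible : ∀ t ∈ Icc a b, ∃ ε > 0, ∀ t' ∈ Icc a b, |t' - t| < ε →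
    EqOn (F t) (F t') (ball (γ t) (r t) ∩ ball (γ t') (r t'))

/-- The analytic element at time `t` of the continuation of `conv A φ` along `γ`: the integral
of `A (ζ - ξ)` against `φ` from `0` to `γ a`, then against the elements `F` along `γ` up to
time `t`, then against `F t` on the segment from `γ t` to `ζ`. -/
def convElement (A φ : ℂ → ℂ) (F : ℝ → ℂ → ℂ) (γ : ℝ → ℂ) (a t : ℝ) (ζ : ℂ) : ℂ :=
  segIntegral (fun ξ => A (ζ - ξ) * φ ξ) 0 (γ a)
    + (∫ s in a..t, A (ζ - γ s) * F s (γ s) * deriv γ s)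
    + segIntegral (fun ξ => A (ζ - ξ) * F t ξ) (γ t) ζ

namespace IsElementFamily

variable {A φ : ℂ → ℂ} {F : ℝ → ℂ → ℂ} {r : ℝ → ℝ} {γ : ℝ → ℂ} {a b R : ℝ}

lemma center_mem_ball (hF : IsElementFamily F r γ a b) {t : ℝ} (ht : t ∈ Icc a b) :
    γ t ∈ ball (γ t) (r t) :=
  mem_ball_self (hF.analytic t ht).1

lemma differentiableOn (hF : IsElementFamily F r γ a b) {t : ℝ} (ht : t ∈ Icc a b) :
    DifferentiableOn ℂ (F t) (ball (γ t) (r t)) :=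
  (hF.analytic t ht).2.differentiableOn

lemma exists_forall_mem_ball (hF : IsElementFamily F r γ a b) (hγ : ContinuousOn γ (Icc a b))
    {t : ℝ} (ht : t ∈ Icc a b) :
    ∃ δ > 0, ∀ s ∈ Icc a b, |s - t| < δ → γ s ∈ ball (γ t) (r t) ∧
      EqOn (F t) (F s) (ball (γ t) (r t) ∩ ball (γ s) (r s)) := by
  obtain ⟨ε, hε, hcomp⟩ := hF.compatible t ht
  obtain ⟨δ, hδ, hball⟩ := Metric.continuousOn_iff.1 hγ t ht (r t) (hF.analytic t ht).1
  exact ⟨min ε δ, lt_min hε hδ, fun s hs hst =>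
    ⟨hball s hs (hst.trans_le (min_le_right _ _)), hcomp s hs (hst.trans_le (min_le_left _ _))⟩⟩

lemma continuousOn_apply (hF : IsElementFamily F r γ a b) (hγ : ContinuousOn γ (Icc a b)) :
    ContinuousOn (fun s => F s (γ s)) (Icc a b) := by
  intro t ht
  obtain ⟨δ, hδ, hloc⟩ := hF.exists_forall_mem_ball hγ ht
  have hcont : ContinuousWithinAt (fun s => F t (γ s)) (Icc a b) t :=
    ((hF.analytic t ht).2 _ (hF.center_mem_ball ht)).continuousAt.comp_continuousWithinAt
      (hγ t ht)
  refine hcont.congr_of_eventuallyEq ?_ rfl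
  filter_upwards [self_mem_nhdsWithin, mem_nhdsWithin_of_mem_nhds (ball_mem_nhds t hδ)]
    with s hs hst
  obtain ⟨hball, heq⟩ := hloc s hs hst
  exact (heq ⟨hball, hF.center_mem_ball hs⟩).symm

lemma intervalIntegrable_mul_deriv (hF : IsElementFamily F r γ a b) (hγ : PiecewiseC1On γ a b)
    {t t' : ℝ} (ht : t ∈ Icc a b) (ht' : t' ∈ Icc a b) :
    IntervalIntegrable (fun s => F s (γ s) * deriv γ s) volume t t' :=
  have hsub : uIcc t t' ⊆ Icc a b := uIcc_subset_Icc ht ht'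
  (hγ.intervalIntegrable_deriv.mono_set (hsub.trans Icc_subset_uIcc)).continuousOn_mul
    ((hF.continuousOn_apply hγ.1).mono hsub)

lemma intervalIntegrable_comp_sub_mul_deriv (hF : IsElementFamily F r γ a b)
    (hγ : PiecewiseC1On γ a b) (hA : Continuous A) (ζ : ℂ) {t t' : ℝ} (ht : t ∈ Icc a b)
    (ht' : t' ∈ Icc a b) :
    IntervalIntegrable (fun s => A (ζ - γ s) * F s (γ s) * deriv γ s) volume t t' := by
  have hγt : ContinuousOn γ (uIcc t t') := hγ.1.mono (uIcc_subset_Icc ht ht')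
  have hAγ : ContinuousOn (fun s => A (ζ - γ s)) (uIcc t t') := by fun_prop
  simpa only [mul_assoc] using (hF.intervalIntegrable_mul_deriv hγ ht ht').continuousOn_mul hAγ

lemma analyticOnNhd_convElement (hF : IsElementFamily F r γ a b) (hγ : PiecewiseC1On γ a b)
    (hA : Differentiable ℂ A) (hφ : ContinuousOn φ (ball 0 R)) (hγa : γ a ∈ ball 0 R)
    {t : ℝ} (ht : t ∈ Icc a b) :
    AnalyticOnNhd ℂ (convElement A φ F γ a t) (ball (γ t) (r t)) := by
  have ha : a ∈ Icc a b := left_mem_Icc.2 (ht.1.trans ht.2)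
  have h0 : (0 : ℂ) ∈ ball 0 R := mem_ball_self (pos_of_mem_ball hγa)
  have hstart := differentiable_segIntegral_comp_sub_mul hA (convex_ball 0 R) hφ h0 hγa
  have hpath := differentiable_integral_comp_sub_smul hA
    (hγ.1.mono (uIcc_subset_Icc ha ht)) (hF.intervalIntegrable_mul_deriv hγ ha ht)
  simp only [smul_eq_mul, ← mul_assoc] at hpath
  have hend := differentiableOn_segIntegral_comp_sub_mul hA isOpen_ball (convex_ball _ _)
    (hF.differentiableOn ht) (hF.center_mem_ball ht)
  exact ((hstart.add hpath).differentiableOn.add hend).analyticOnNhd isOpen_ball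

lemma exists_eqOn_convElement (hF : IsElementFamily F r γ a b) (hγ : PiecewiseC1On γ a b)
    (hA : Differentiable ℂ A) (φ : ℂ → ℂ) {t : ℝ} (ht : t ∈ Icc a b) :
    ∃ δ > 0, ∀ t' ∈ Icc a b, |t' - t| < δ →
      EqOn (convElement A φ F γ a t) (convElement A φ F γ a t')
        (ball (γ t) (r t) ∩ ball (γ t') (r t')) := by
  obtain ⟨δ, hδ, hloc⟩ := hF.exists_forall_mem_ball hγ.1 ht
  refine ⟨δ, hδ, fun t' ht' htt' ζ hζ => ?_⟩
  have ha : a ∈ Icc a b := left_mem_Icc.2 (ht.1.trans ht.2)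
  have hlocs {s : ℝ} (hs : s ∈ uIcc t t') :=
    hloc s (uIcc_subset_Icc ht ht' hs) ((abs_sub_left_of_mem_uIcc hs).trans_lt htt')
  obtain ⟨hγt', heq⟩ := hloc t' ht' htt'
  have hpath : ∫ s in t..t', A (ζ - γ s) * F s (γ s) * deriv γ s
      = ∫ s in t..t', A (ζ - γ s) * F t (γ s) * deriv γ s := by
    refine integral_congr fun s hs => ?_
    obtain ⟨hball, heqs⟩ := hlocs hs
    simp only [heqs ⟨hball, hF.center_mem_ball (uIcc_subset_Icc ht ht' hs)⟩]
  have hend : segIntegral (fun ξ => A (ζ - ξ) * F t' ξ) (γ t') ζ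
      = segIntegral (fun ξ => A (ζ - ξ) * F t ξ) (γ t') ζ :=
    segIntegral_congr ((convex_ball _ _).inter (convex_ball _ _))
      ⟨hγt', hF.center_mem_ball ht'⟩ hζ fun ξ hξ => by simp only [heq hξ]
  have hclose := hγ.integral_comp_mul_deriv_add_segIntegral
    (differentiableOn_comp_sub_left_mul hA (hF.differentiableOn ht) ζ) ht ht'
    (fun s hs => (hlocs hs).1) hζ.1
  have hsplit := integral_add_adjacent_intervals
    (hF.intervalIntegrable_comp_sub_mul_deriv hγ hA.continuous ζ ha ht)
    (hF.intervalIntegrable_comp_sub_mul_deriv hγ hA.continuous ζ ht ht')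
  rw [convElement, convElement, hend, ← hsplit, hpath, ← hclose]
  ring

end IsElementFamily

lemma eventually_convElement_eq_conv {A φ : ℂ → ℂ} {F : ℝ → ℂ → ℂ} {γ : ℝ → ℂ} {a R : ℝ}
    (hA : Differentiable ℂ A) (hφ : DifferentiableOn ℂ φ (ball 0 R)) (hγa : γ a ∈ ball 0 R)
    (hF : ∀ᶠ z in 𝓝 (γ a), F a z = φ z) :
    ∀ᶠ ζ in 𝓝 (γ a), convElement A φ F γ a a ζ = conv A φ ζ := by
  obtain ⟨ε, hε, hball⟩ := eventually_nhds_iff_ball.1 hF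
  filter_upwards [ball_mem_nhds _ hε, isOpen_ball.mem_nhds hγa] with ζ hζε hζR
  have hend : segIntegral (fun ξ => A (ζ - ξ) * F a ξ) (γ a) ζ
      = segIntegral (fun ξ => A (ζ - ξ) * φ ξ) (γ a) ζ :=
    segIntegral_congr (convex_ball _ _) (mem_ball_self hε) hζε
      fun ξ hξ => by simp only [hball ξ hξ]
  rw [convElement, integral_same, add_zero, hend, conv_eq_segIntegral]
  exact segIntegral_add_segIntegral (differentiableOn_comp_sub_left_mul hA hφ ζ)
    (mem_ball_self (pos_of_mem_ball hγa)) hγa hζR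

theorem contAlong_conv {A φ : ℂ → ℂ} {F : ℝ → ℂ → ℂ} {r : ℝ → ℝ} {γ : ℝ → ℂ} {a b R : ℝ}
    (hA : Differentiable ℂ A) (hφ : DifferentiableOn ℂ φ (ball 0 R)) (hγ : PiecewiseC1On γ a b)
    (hγa : γ a ∈ ball 0 R) (hF : IsElementFamily F r γ a b)
    (hF₀ : ∀ᶠ z in 𝓝 (γ a), F a z = φ z) :
    ContAlong (conv A φ) γ a b (convElement A φ F γ a b) :=
  ⟨convElement A φ F γ a, r,
    fun t ht => ⟨(hF.analytic t ht).1,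
      hF.analyticOnNhd_convElement hγ hA hφ.continuousOn hγa ht⟩,
    fun _ ht => hF.exists_eqOn_convElement hγ hA φ ht,
    eventually_convElement_eq_conv hA hφ hγa hF₀,
    Eventually.of_forall fun _ => rfl⟩

theorem stmt5_general (Ω : Set ℂ) (A : ℂ → ℂ) (hA : Differentiable ℂ A)
    (φ : ℂ → ℂ) (hφ : OmegaCont Ω φ) :
    OmegaCont Ω (conv A φ) ∧
    ∃ R > 0, AnalyticOnNhd ℂ φ (ball 0 R) ∧
      (∀ ζ ∈ ball (0:ℂ) R, ζ ≠ 0 → ζ ∉ Ω) ∧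
      ∀ γ : ℝ → ℂ, PiecewiseC1On γ 0 1 → γ 0 ∈ ball (0:ℂ) R →
        ∀ (F : ℝ → ℂ → ℂ) (r : ℝ → ℝ),
          (∀ t ∈ Icc (0:ℝ) 1, 0 < r t ∧
            AnalyticOnNhd ℂ (F t) (ball (γ t) (r t))) →
          (∀ t ∈ Icc (0:ℝ) 1, ∃ ε > 0, ∀ t' ∈ Icc (0:ℝ) 1, |t' - t| < ε →
            EqOn (F t) (F t')
              (ball (γ t) (r t) ∩ ball (γ t') (r t'))) →
          (∀ᶠ z in 𝓝 (γ 0), F 0 z = φ z) →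
          ContAlong (conv A φ) γ 0 1 (fun ζ =>
            (∫ t in (0:ℝ)..1, A (ζ - (t : ℂ) * γ 0) * φ ((t : ℂ) * γ 0)) * γ 0
            + (∫ s in (0:ℝ)..1, A (ζ - γ s) * F s (γ s) * deriv γ s)
            + (∫ t in (0:ℝ)..1,
                A (ζ - (γ 1 + (t : ℂ) * (ζ - γ 1))) * F 1 (γ 1 + (t : ℂ) * (ζ - γ 1)))
                * (ζ - γ 1)) := by
  obtain ⟨R, hR, hφR, hΩ, hcont⟩ := hφ
  have hφd := hφR.differentiableOn
  have hconv : AnalyticOnNhd ℂ (conv A φ) (ball 0 R) :=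
    (differentiableOn_conv hA isOpen_ball (convex_ball 0 R) hφd (mem_ball_self hR)).analyticOnNhd
      isOpen_ball
  refine ⟨⟨R, hR, hconv, hΩ, fun γ hγ hγ₀ hγ₀' hγΩ => ?_⟩, R, hR, hφR, hΩ,
    fun γ hγ hγ₀ F r hF hcomp hF₀ => ?_⟩
  · obtain ⟨_, F, r, hF, hcomp, hF₀, -⟩ := hcont γ hγ hγ₀ hγ₀' hγΩ
    exact ⟨_, contAlong_conv hA hφd hγ hγ₀ ⟨hF, hcomp⟩ hF₀⟩
  · convert contAlong_conv hA hφd hγ hγ₀ ⟨hF, hcomp⟩ hF₀ using 2 with ζ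
    simp only [convElement, segIntegral, zero_add, sub_zero]

/-- If `A` is entire and `φ` is `Ω`-continuable, then `A ⋆ φ` is `Ω`-continuable,
and its analytic continuation along a path `γ` of `ℂ∖Ω` starting close enough to
`0` is given by the explicit formula
`ζ ↦ ∫₀^{ζ₀} A(ζ-ξ)φ(ξ)dξ + ∫_γ A(ζ-ξ)φ(ξ)dξ + ∫_{ζ₁}^ζ A(ζ-ξ)(cont_γ φ)(ξ)dξ`,
where the middle integral uses the germs `cont_{γ_s} φ` (encoded by a locally
compatible family `F` of analytic elements continuing `φ` along `γ`). -/
theorem stmt5 (Ω : Set ℂ) (hne : Ω.Nonempty) (hcl : IsClosed Ω)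
    (hdisc : DiscreteTopology Ω)
    (A : ℂ → ℂ) (hA : Differentiable ℂ A)
    (φ : ℂ → ℂ) (hφ : OmegaCont Ω φ) :
    OmegaCont Ω (conv A φ) ∧
    ∃ R > 0, AnalyticOnNhd ℂ φ (Metric.ball 0 R) ∧
      (∀ ζ ∈ Metric.ball (0:ℂ) R, ζ ≠ 0 → ζ ∉ Ω) ∧
      ∀ γ : ℝ → ℂ, PiecewiseC1On γ 0 1 → γ 0 ∈ Metric.ball (0:ℂ) R → γ 0 ≠ 0 →
        (∀ t ∈ Set.Icc (0:ℝ) 1, γ t ∉ Ω) →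
        ∀ (F : ℝ → ℂ → ℂ) (r : ℝ → ℝ),
          (∀ t ∈ Set.Icc (0:ℝ) 1, 0 < r t ∧
            AnalyticOnNhd ℂ (F t) (Metric.ball (γ t) (r t))) →
          (∀ t ∈ Set.Icc (0:ℝ) 1, ∃ ε > 0, ∀ t' ∈ Set.Icc (0:ℝ) 1, |t' - t| < ε →
            Set.EqOn (F t) (F t')
              (Metric.ball (γ t) (r t) ∩ Metric.ball (γ t') (r t'))) →
          (∀ᶠ z in 𝓝 (γ 0), F 0 z = φ z) →
          ContAlong (conv A φ) γ 0 1 (fun ζ =>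
            (∫ t in (0:ℝ)..1, A (ζ - (t : ℂ) * γ 0) * φ ((t : ℂ) * γ 0)) * γ 0
            + (∫ s in (0:ℝ)..1, A (ζ - γ s) * F s (γ s) * deriv γ s)
            + (∫ t in (0:ℝ)..1,
                A (ζ - (γ 1 + (t : ℂ) * (ζ - γ 1))) * F 1 (γ 1 + (t : ℂ) * (ζ - γ 1)))
                * (ζ - γ 1)) :=
  have ⟨hconv, R, hR, hφR, hΩ, hcont⟩ := stmt5_general Ω A hA φ hφ
  ⟨hconv, R, hR, hφR, hΩ, fun γ hγ hγ₀ _ _ => hcont γ hγ hγ₀⟩
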